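/- Let f be an integrable probability density on ℝ with Fourier transform 𝔽[f](y) = ∫ f(t) e^{-iyt} dt, and let F(x) = ∫_{-∞}^x f(t) dt be its cumulative distribution function. Then for every x at which F is continuous, F(x) = (1/2π) ∫_{-∞}^{+∞} (𝔽[f](y)/(iy)) e^{ixy} dy + 1/2, where the integral is taken as a principal value. -/

import Mathlib

/-!
The truncated inverse transform of the odd multiplier `1 / (iy)` is the sine integral: for
`0 < r ≤ R`, pairing `y` with `-y` gives
`∫_{r ≤ |y| ≤ R} e^{iuy} / (iy) dy = 2 (Si (R u) - Si (r u))`,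
which is bounded uniformly in `r, R, u` and tends to `π sign u` as `r → 0`, `R → ∞`, because
`Si R → π / 2` (Dirichlet). Exchanging the two integrals in the inversion formula puts this kernel,
with `u = x - t`, under the integral against `f`, and dominated convergence leaves
`½ ∫ sign (x - t) f t`, half the mass to the left of `x` minus half the mass to its right.

For the Dirichlet integral, write `1 / y = ∫_0^∞ e^{-ys} ds` and integrate `sin y e^{-ys}` in `y`
first: up to an error at most `∫_0^∞ e^{-Rs} ds = 1 / R`, what remains is
`∫_0^∞ ds / (1 + s²) = π / 2`.
-/

open MeasureTheory Complex Filter Set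
open scoped Topology

section DirichletIntegral

lemma hasDerivAt_exp_neg_mul_cos_add_mul_sin (s x : ℝ) :
    HasDerivAt (fun x => -(Real.exp (-x * s) * ((Real.cos x + s * Real.sin x) / (1 + s ^ 2))))
      (Real.sin x * Real.exp (-x * s)) x := by
  have hexp : HasDerivAt (fun x : ℝ => Real.exp (-x * s)) (Real.exp (-x * s) * (-1 * s)) x :=
    ((hasDerivAt_id x).neg.mul_const s).exp
  have htrig : HasDerivAt (fun x => (Real.cos x + s * Real.sin x) / (1 + s ^ 2))
      ((-Real.sin x + s * Real.cos x) / (1 + s ^ 2)) x :=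
    ((Real.hasDerivAt_cos x).add ((Real.hasDerivAt_sin x).const_mul s)).div_const _
  refine (hexp.mul htrig).neg.congr_deriv ?_
  have : 1 + s ^ 2 ≠ 0 := by positivity
  field_simp
  ring

lemma integral_sin_mul_exp_neg_mul (R s : ℝ) :
    ∫ x in (0 : ℝ)..R, Real.sin x * Real.exp (-x * s) =
      (1 + s ^ 2)⁻¹ - Real.exp (-R * s) * ((Real.cos R + s * Real.sin R) / (1 + s ^ 2)) := by
  rw [intervalIntegral.integral_eq_sub_of_hasDerivAt
    (fun x _ => hasDerivAt_exp_neg_mul_cos_add_mul_sin s x)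
    (Continuous.intervalIntegrable (by fun_prop) _ _)]
  simp only [neg_zero, zero_mul, Real.exp_zero, Real.cos_zero, Real.sin_zero, mul_zero, add_zero]
  ring

lemma integral_exp_neg_mul_Ioi_zero {x : ℝ} (hx : 0 < x) :
    ∫ s in Ioi (0 : ℝ), Real.exp (-x * s) = x⁻¹ := by
  rw [integral_exp_mul_Ioi (neg_lt_zero.2 hx), mul_zero, Real.exp_zero, neg_div_neg_eq, one_div]

lemma integral_sin_mul_exp_neg_mul_Ioi_zero {x : ℝ} (hx : 0 < x) :
    ∫ s in Ioi (0 : ℝ), Real.sin x * Real.exp (-x * s) = Real.sinc x := by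
  rw [integral_const_mul, integral_exp_neg_mul_Ioi_zero hx, Real.sinc_of_ne_zero hx.ne',
    div_eq_mul_inv]

lemma integrable_sin_mul_exp_neg_mul_prod (R : ℝ) :
    Integrable (fun p : ℝ × ℝ => Real.sin p.1 * Real.exp (-p.1 * p.2))
      ((volume.restrict (Ioc 0 R)).prod (volume.restrict (Ioi 0))) := by
  refine (integrable_prod_iff (Continuous.aestronglyMeasurable (by fun_prop))).2 ⟨?_, ?_⟩
  · filter_upwards [ae_restrict_mem measurableSet_Ioc] with x hx
    exact (integrableOn_exp_mul_Ioi (neg_lt_zero.2 hx.1) 0).const_mul _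
  · refine (Real.integrable_sinc (μ := volume.restrict (Ioc 0 R))).norm.congr ?_
    filter_upwards [ae_restrict_mem measurableSet_Ioc] with x hx
    simp only [norm_mul, Real.norm_of_nonneg (Real.exp_pos _).le]
    rw [integral_const_mul, integral_exp_neg_mul_Ioi_zero hx.1, Real.sinc_of_ne_zero hx.1.ne',
      norm_div, Real.norm_of_nonneg hx.1.le, div_eq_mul_inv]

lemma abs_cos_add_mul_sin_div_le_one (R s : ℝ) :
    |(Real.cos R + s * Real.sin R) / (1 + s ^ 2)| ≤ 1 := by
  have hpos : 0 < 1 + s ^ 2 := by positivity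
  rw [abs_div, abs_of_pos hpos, div_le_one hpos]
  refine abs_le_of_sq_le_sq ?_ hpos.le
  -- Cauchy–Schwarz for `(1, s)` and `(cos R, sin R)`
  calc (Real.cos R + s * Real.sin R) ^ 2
      ≤ (1 + s ^ 2) * (Real.sin R ^ 2 + Real.cos R ^ 2) := by
        linarith [sq_nonneg (s * Real.cos R - Real.sin R)]
    _ ≤ (1 + s ^ 2) ^ 2 := by rw [Real.sin_sq_add_cos_sq]; nlinarith [sq_nonneg s]

/-- The sine integral `Si`. -/
noncomputable def sinIntegral (a : ℝ) : ℝ := ∫ x in (0 : ℝ)..a, Real.sinc x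

lemma sinIntegral_eq_integral_Ioi {R : ℝ} (hR : 0 ≤ R) :
    sinIntegral R = ∫ s in Ioi (0 : ℝ),
      ((1 + s ^ 2)⁻¹ - Real.exp (-R * s) * ((Real.cos R + s * Real.sin R) / (1 + s ^ 2))) :=
  calc sinIntegral R
      = ∫ x in Ioc 0 R, ∫ s in Ioi (0 : ℝ), Real.sin x * Real.exp (-x * s) := by
        rw [sinIntegral, intervalIntegral.integral_of_le hR]
        exact setIntegral_congr_fun measurableSet_Ioc
          fun x hx => (integral_sin_mul_exp_neg_mul_Ioi_zero hx.1).symm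
    _ = ∫ s in Ioi (0 : ℝ), ∫ x in Ioc 0 R, Real.sin x * Real.exp (-x * s) :=
        integral_integral_swap (integrable_sin_mul_exp_neg_mul_prod R)
    _ = _ := by simp_rw [← intervalIntegral.integral_of_le hR, integral_sin_mul_exp_neg_mul]

lemma abs_sinIntegral_sub_pi_div_two_le {R : ℝ} (hR : 0 < R) :
    |sinIntegral R - Real.pi / 2| ≤ R⁻¹ := by
  set err : ℝ → ℝ := fun s =>
    Real.exp (-R * s) * ((Real.cos R + s * Real.sin R) / (1 + s ^ 2)) with herr
  have hexp : IntegrableOn (fun s => Real.exp (-R * s)) (Ioi 0) :=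
    integrableOn_exp_mul_Ioi (neg_lt_zero.2 hR) 0
  have herr_le (s : ℝ) : ‖err s‖ ≤ Real.exp (-R * s) := by
    rw [herr, norm_mul, Real.norm_of_nonneg (Real.exp_pos _).le]
    exact mul_le_of_le_one_right (Real.exp_pos _).le (abs_cos_add_mul_sin_div_le_one R s)
  have herr_int : IntegrableOn err (Ioi 0) :=
    hexp.mono' (Measurable.aestronglyMeasurable (by fun_prop)) (ae_of_all _ herr_le)
  have hsub : sinIntegral R - Real.pi / 2 = -∫ s in Ioi (0 : ℝ), err s := by
    rw [sinIntegral_eq_integral_Ioi hR.le,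
      integral_sub integrable_inv_one_add_sq.integrableOn herr_int, integral_Ioi_inv_one_add_sq,
      Real.arctan_zero]
    ring
  calc |sinIntegral R - Real.pi / 2| = ‖∫ s in Ioi (0 : ℝ), err s‖ := by
        rw [hsub, abs_neg, Real.norm_eq_abs]
    _ ≤ ∫ s in Ioi (0 : ℝ), Real.exp (-R * s) :=
        norm_integral_le_of_norm_le hexp (ae_of_all _ herr_le)
    _ = R⁻¹ := integral_exp_neg_mul_Ioi_zero hR

lemma tendsto_sinIntegral_atTop : Tendsto sinIntegral atTop (𝓝 (Real.pi / 2)) := by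
  rw [tendsto_iff_norm_sub_tendsto_zero]
  refine squeeze_zero' (Eventually.of_forall fun _ => norm_nonneg _) ?_ tendsto_inv_atTop_zero
  filter_upwards [eventually_gt_atTop 0] with R hR
  exact abs_sinIntegral_sub_pi_div_two_le hR

@[simp]
lemma sinIntegral_zero : sinIntegral 0 = 0 :=
  intervalIntegral.integral_same

@[simp]
lemma sinIntegral_neg (a : ℝ) : sinIntegral (-a) = -sinIntegral a := by
  have h := intervalIntegral.integral_comp_neg (a := 0) (b := a) Real.sinc
  simp only [Real.sinc_neg, neg_zero] at h
  rw [sinIntegral, sinIntegral, h, intervalIntegral.integral_symm]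

lemma sinIntegral_sub (a b : ℝ) : sinIntegral b - sinIntegral a = ∫ x in a..b, Real.sinc x :=
  intervalIntegral.integral_interval_sub_left (Real.continuous_sinc.intervalIntegrable _ _)
    (Real.continuous_sinc.intervalIntegrable _ _)

@[fun_prop]
lemma continuous_sinIntegral : Continuous sinIntegral :=
  intervalIntegral.continuous_primitive (fun _ _ => Real.continuous_sinc.intervalIntegrable _ _) 0

lemma abs_sinIntegral_le_abs (a : ℝ) : |sinIntegral a| ≤ |a| := by
  simpa [sinIntegral] using intervalIntegral.norm_integral_le_of_norm_le_const (a := 0) (b := a)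
    fun x _ => (Real.norm_eq_abs _).trans_le (Real.abs_sinc_le_one x)

lemma abs_sinIntegral_le (a : ℝ) : |sinIntegral a| ≤ Real.pi / 2 + 1 := by
  wlog ha : 0 ≤ a generalizing a
  · simpa using this (-a) (by linarith)
  rcases le_total a 1 with h | h
  · linarith [abs_sinIntegral_le_abs a, abs_of_nonneg ha, Real.pi_pos]
  · have hsub := abs_le.1 (abs_sinIntegral_sub_pi_div_two_le (zero_lt_one.trans_le h))
    rw [abs_le]
    constructor <;> linarith [inv_le_one_of_one_le₀ h, Real.pi_pos]

lemma tendsto_sinIntegral_mul_atTop (u : ℝ) :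
    Tendsto (fun R => sinIntegral (R * u)) atTop (𝓝 (Real.pi / 2 * SignType.sign u)) := by
  have hpos {v : ℝ} (hv : 0 < v) :
      Tendsto (fun R => sinIntegral (R * v)) atTop (𝓝 (Real.pi / 2)) :=
    tendsto_sinIntegral_atTop.comp (tendsto_id.atTop_mul_const hv)
  rcases lt_trichotomy u 0 with h | rfl | h
  · simpa [sign_neg h] using (hpos (neg_pos.2 h)).neg
  · simp
  · simpa [sign_pos h] using hpos h

end DirichletIntegral

section Annulus

/-- The symmetric domain `r ≤ |y| ≤ R` over which a principal value integral with a singularity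
at `0` is truncated. -/
def annulus (r R : ℝ) : Set ℝ := {y | r ≤ |y| ∧ |y| ≤ R}

lemma measurableSet_annulus (r R : ℝ) : MeasurableSet (annulus r R) :=
  measurable_norm measurableSet_Icc

lemma annulus_subset_Icc (r R : ℝ) : annulus r R ⊆ Icc (-R) R :=
  fun _ hy => abs_le.1 hy.2

instance isFiniteMeasure_restrict_annulus (r R : ℝ) :
    IsFiniteMeasure (volume.restrict (annulus r R)) :=
  isFiniteMeasure_restrict.2 (measure_ne_top_of_subset (annulus_subset_Icc r R) (by simp))

lemma annulus_eq_union {r : ℝ} (hr : 0 < r) (R : ℝ) :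
    annulus r R = Icc (-R) (-r) ∪ Icc r R := by
  ext y
  simp only [annulus, mem_ofPred_eq, mem_union, mem_Icc]
  grind

lemma setIntegral_annulus {E : Type*} [NormedAddCommGroup E] [NormedSpace ℝ E] {r R : ℝ}
    (hr : 0 < r) (hrR : r ≤ R) {g : ℝ → E} (hg : IntegrableOn g (annulus r R)) :
    ∫ y in annulus r R, g y = ∫ y in r..R, (g y + g (-y)) := by
  rw [annulus_eq_union hr] at hg ⊢
  obtain ⟨hneg, hpos⟩ := integrableOn_union.1 hg
  have hdisj : Disjoint (Icc (-R) (-r)) (Icc r R) :=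
    disjoint_left.2 fun y hy hy' => by linarith [hy.2, hy'.1]
  have hpos' : IntervalIntegrable g volume r R :=
    (intervalIntegrable_iff_integrableOn_Icc_of_le hrR).2 hpos
  have hneg' : IntervalIntegrable (fun y => g (-y)) volume r R := by
    rw [IntervalIntegrable.iff_comp_neg]
    simpa using ((intervalIntegrable_iff_integrableOn_Icc_of_le (neg_le_neg hrR)).2 hneg).symm
  rw [setIntegral_union hdisj measurableSet_Icc hneg hpos, integral_Icc_eq_integral_Ioc,
    integral_Icc_eq_integral_Ioc, ← intervalIntegral.integral_of_le (neg_le_neg hrR),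
    ← intervalIntegral.integral_of_le hrR, ← intervalIntegral.integral_comp_neg, add_comm,
    intervalIntegral.integral_add hpos' hneg']

end Annulus

section Kernel

/-- The kernel `e^{iuy} / (iy)` through which the inversion formula, after exchanging the
integrals, depends on `u = x - t`. -/
noncomputable def inversionKernel (u y : ℝ) : ℂ := exp (I * u * y) / (I * y)

@[fun_prop]
lemma measurable_inversionKernel {α : Type*} [MeasurableSpace α] {u y : α → ℝ}
    (hu : Measurable u) (hy : Measurable y) : Measurable fun a => inversionKernel (u a) (y a) := by
  unfold inversionKernel
  fun_prop

lemma norm_inversionKernel (u y : ℝ) : ‖inversionKernel u y‖ = |y|⁻¹ := by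
  have h : I * u * y = ((u * y : ℝ) : ℂ) * I := by push_cast; ring
  rw [inversionKernel, norm_div, h, norm_exp_ofReal_mul_I, norm_mul, norm_I, one_mul, norm_real,
    Real.norm_eq_abs, one_div]

lemma norm_inversionKernel_le {r R y : ℝ} (hr : 0 < r) (hy : y ∈ annulus r R) (u : ℝ) :
    ‖inversionKernel u y‖ ≤ r⁻¹ := by
  rw [norm_inversionKernel]
  exact inv_anti₀ hr hy.1

lemma inversionKernel_sub (x t y : ℝ) :
    inversionKernel (x - t) y = inversionKernel x y * exp (-I * y * t) := by
  rw [inversionKernel, inversionKernel, div_mul_eq_mul_div, ← exp_add]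
  push_cast
  ring_nf

lemma inversionKernel_add_inversionKernel_neg (u : ℝ) {y : ℝ} (hy : y ≠ 0) :
    inversionKernel u y + inversionKernel u (-y) = ((2 * (u * Real.sinc (u * y)) : ℝ) : ℂ) := by
  have hsinc : u * Real.sinc (u * y) = Real.sin (u * y) / y := by
    rcases eq_or_ne u 0 with rfl | hu
    · simp
    · rw [Real.sinc_of_ne_zero (mul_ne_zero hu hy)]
      field_simp
  have hy' : (y : ℂ) ≠ 0 := ofReal_ne_zero.2 hy
  have hexp : I * u * y = u * y * I := by ring
  have hexp_neg : I * u * -y = -(u * y) * I := by ring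
  rw [hsinc]
  push_cast [inversionKernel]
  rw [Complex.sin, hexp, hexp_neg]
  field_simp
  simp only [I_sq]
  ring

lemma integrableOn_inversionKernel_annulus {r : ℝ} (hr : 0 < r) (u R : ℝ) :
    IntegrableOn (inversionKernel u) (annulus r R) :=
  (integrable_const r⁻¹).mono'
    (Measurable.aestronglyMeasurable (by fun_prop))
    ((ae_restrict_mem (measurableSet_annulus r R)).mono fun _ hy => norm_inversionKernel_le hr hy u)

lemma integral_annulus_inversionKernel {r R : ℝ} (hr : 0 < r) (hrR : r ≤ R) (u : ℝ) :
    ∫ y in annulus r R, inversionKernel u y =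
      ((2 * (sinIntegral (R * u) - sinIntegral (r * u)) : ℝ) : ℂ) :=
  calc ∫ y in annulus r R, inversionKernel u y
      = ∫ y in r..R, (inversionKernel u y + inversionKernel u (-y)) :=
        setIntegral_annulus hr hrR (integrableOn_inversionKernel_annulus hr u R)
    _ = ∫ y in r..R, ((2 * (u * Real.sinc (u * y)) : ℝ) : ℂ) := by
        refine intervalIntegral.integral_congr fun y hy => ?_
        rw [uIcc_of_le hrR] at hy
        exact inversionKernel_add_inversionKernel_neg u (hr.trans_le hy.1).ne'
    _ = _ := by
        rw [intervalIntegral.integral_ofReal, intervalIntegral.integral_const_mul,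
          intervalIntegral.integral_const_mul, intervalIntegral.mul_integral_comp_mul_left,
          sinIntegral_sub, mul_comm R, mul_comm r]

lemma norm_integral_annulus_inversionKernel_le {r R : ℝ} (hr : 0 < r) (hrR : r ≤ R) (u : ℝ) :
    ‖∫ y in annulus r R, inversionKernel u y‖ ≤ 2 * (Real.pi + 2) := by
  rw [integral_annulus_inversionKernel hr hrR, norm_real, Real.norm_eq_abs, abs_mul, abs_two]
  linarith [abs_sub (sinIntegral (R * u)) (sinIntegral (r * u)), abs_sinIntegral_le (R * u),
    abs_sinIntegral_le (r * u)]

lemma eventually_pos_and_le_nhdsGT_prod_atTop :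
    ∀ᶠ p : ℝ × ℝ in 𝓝[>] 0 ×ˢ atTop, 0 < p.1 ∧ p.1 ≤ p.2 := by
  filter_upwards [prod_mem_prod (Ioc_mem_nhdsGT zero_lt_one) (Ici_mem_atTop (1 : ℝ))] with p hp
  exact ⟨hp.1.1, hp.1.2.trans hp.2⟩

lemma tendsto_integral_annulus_inversionKernel (u : ℝ) :
    Tendsto (fun p : ℝ × ℝ => ∫ y in annulus p.1 p.2, inversionKernel u y) (𝓝[>] 0 ×ˢ atTop)
      (𝓝 (Real.pi * SignType.sign u : ℝ)) := by
  have hinner : Tendsto (fun r => sinIntegral (r * u)) (𝓝[>] 0) (𝓝 0) := by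
    have hcont : Continuous fun r => sinIntegral (r * u) := by fun_prop
    simpa using (hcont.tendsto 0).mono_left nhdsWithin_le_nhds
  have hlim := (((tendsto_sinIntegral_mul_atTop u).comp tendsto_snd).sub
    (hinner.comp tendsto_fst)).const_mul 2
  have hvalue : 2 * (Real.pi / 2 * (SignType.sign u : ℝ) - 0) = Real.pi * SignType.sign u := by
    ring
  rw [hvalue] at hlim
  refine ((continuous_ofReal.tendsto _).comp hlim).congr' ?_
  filter_upwards [eventually_pos_and_le_nhdsGT_prod_atTop] with p hp
  exact (integral_annulus_inversionKernel hp.1 hp.2 u).symm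

end Kernel

section Inversion

variable {E : Type*} [NormedAddCommGroup E] [NormedSpace ℂ E]

lemma integrable_inversionKernel_smul_prod {μ : Measure ℝ} [SFinite μ] {f : ℝ → E}
    (hf : Integrable f μ) {r : ℝ} (hr : 0 < r) (R x : ℝ) :
    Integrable (fun p : ℝ × ℝ => inversionKernel (x - p.2) p.1 • f p.2)
      ((volume.restrict (annulus r R)).prod μ) := by
  refine (hf.comp_snd _).bdd_smul r⁻¹ (Measurable.aestronglyMeasurable (by fun_prop)) ?_
  filter_upwards [Measure.quasiMeasurePreserving_fst.ae
    (ae_restrict_mem (measurableSet_annulus r R))] with p hp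
  exact norm_inversionKernel_le hr hp _

lemma sign_sub_smul_eq_indicator (f : ℝ → E) (x t : ℝ) :
    ((SignType.sign (x - t) : ℝ) : ℂ) • f t =
      (Iio x).indicator f t + (Iic x).indicator f t - f t := by
  rcases lt_trichotomy t x with h | rfl | h
  · simp [sign_pos (sub_pos.2 h), h, h.le]
  · simp
  · simp [sign_neg (sub_neg.2 h), h.not_gt, h.not_ge]

lemma integral_sign_sub_smul {μ : Measure ℝ} {f : ℝ → E} (hf : Integrable f μ) (x : ℝ) :
    ∫ t, ((SignType.sign (x - t) : ℝ) : ℂ) • f t ∂μ =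
      ∫ t in Iio x, f t ∂μ + ∫ t in Iic x, f t ∂μ - ∫ t, f t ∂μ := by
  have hIio := hf.indicator (measurableSet_Iio (a := x))
  have hIic := hf.indicator (measurableSet_Iic (a := x))
  have hsum : Integrable (fun t => (Iio x).indicator f t + (Iic x).indicator f t) μ :=
    hIio.add hIic
  simp_rw [sign_sub_smul_eq_indicator]
  rw [integral_sub hsum hf, integral_add hIio hIic,
    integral_indicator measurableSet_Iio, integral_indicator measurableSet_Iic]

variable [CompleteSpace E]

lemma integral_annulus_inversionKernel_smul_integral {μ : Measure ℝ} [SFinite μ] {f : ℝ → E}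
    (hf : Integrable f μ) {r : ℝ} (hr : 0 < r) (R x : ℝ) :
    ∫ y in annulus r R, inversionKernel x y • ∫ t, exp (-I * y * t) • f t ∂μ =
      ∫ t, (∫ y in annulus r R, inversionKernel (x - t) y) • f t ∂μ :=
  calc ∫ y in annulus r R, inversionKernel x y • ∫ t, exp (-I * y * t) • f t ∂μ
      = ∫ y in annulus r R, ∫ t, inversionKernel (x - t) y • f t ∂μ := by
        simp_rw [inversionKernel_sub, mul_smul, integral_smul]
    _ = ∫ t, (∫ y in annulus r R, inversionKernel (x - t) y • f t) ∂μ :=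
        integral_integral_swap (integrable_inversionKernel_smul_prod hf hr R x)
    _ = _ := by simp_rw [integral_smul_const]

lemma tendsto_integral_annulus_inversionKernel_smul_integral {μ : Measure ℝ} [SFinite μ] {f : ℝ → E}
    (hf : Integrable f μ) (x : ℝ) :
    Tendsto (fun p : ℝ × ℝ =>
        ∫ y in annulus p.1 p.2, inversionKernel x y • ∫ t, exp (-I * y * t) • f t ∂μ)
      (𝓝[>] 0 ×ˢ atTop) (𝓝 (∫ t, ((Real.pi * SignType.sign (x - t) : ℝ) : ℂ) • f t ∂μ)) := by
  have hlim : Tendsto (fun p : ℝ × ℝ =>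
        ∫ t, (∫ y in annulus p.1 p.2, inversionKernel (x - t) y) • f t ∂μ)
      (𝓝[>] 0 ×ˢ atTop) (𝓝 (∫ t, ((Real.pi * SignType.sign (x - t) : ℝ) : ℂ) • f t ∂μ)) := by
    refine tendsto_integral_filter_of_dominated_convergence (fun t => 2 * (Real.pi + 2) * ‖f t‖)
      ?_ ?_ (hf.norm.const_mul _)
      (ae_of_all _ fun t => (tendsto_integral_annulus_inversionKernel (x - t)).smul_const _)
    · filter_upwards [eventually_pos_and_le_nhdsGT_prod_atTop] with p hp
      simp_rw [integral_annulus_inversionKernel hp.1 hp.2]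
      exact (Continuous.aestronglyMeasurable (by fun_prop)).smul hf.1
    · filter_upwards [eventually_pos_and_le_nhdsGT_prod_atTop] with p hp
      refine ae_of_all _ fun t => ?_
      rw [norm_smul]
      gcongr
      exact norm_integral_annulus_inversionKernel_le hp.1 hp.2 _
  refine hlim.congr' ?_
  filter_upwards [eventually_pos_and_le_nhdsGT_prod_atTop] with p hp
  exact (integral_annulus_inversionKernel_smul_integral hf hp.1 p.2 x).symm

theorem cdf_fourier_inversion_general {μ : Measure ℝ} [SFinite μ] {f : ℝ → E}
    (hf : Integrable f μ) (x : ℝ) :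
    Tendsto
      (fun p : ℝ × ℝ =>
        (1 / (2 * Real.pi) : ℂ) •
          ∫ y in annulus p.1 p.2,
            (exp (I * x * y) / (I * y)) • ∫ t, exp (-I * y * t) • f t ∂μ)
      (𝓝[>] 0 ×ˢ atTop)
      (𝓝 ((1 / 2 : ℂ) • (∫ t in Iio x, f t ∂μ + ∫ t in Iic x, f t ∂μ)
        - (1 / 2 : ℂ) • ∫ t, f t ∂μ)) := by
  have hlim := (tendsto_integral_annulus_inversionKernel_smul_integral hf x).const_smul
    (1 / (2 * Real.pi) : ℂ)
  have hpi : (Real.pi : ℂ) ≠ 0 := ofReal_ne_zero.2 Real.pi_ne_zero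
  have hhalf : (1 / (2 * Real.pi) * Real.pi : ℂ) = 1 / 2 := by field_simp
  simp_rw [ofReal_mul, mul_smul, integral_smul, smul_smul _ (Real.pi : ℂ), hhalf,
    integral_sign_sub_smul hf, smul_sub] at hlim
  exact hlim

end Inversion

theorem cdf_fourier_inversion
    (f : ℝ → ℝ)
    (hf_nonneg : ∀ t, 0 ≤ f t)
    (hf_int : MeasureTheory.Integrable f)
    (hf_mass : ∫ t : ℝ, f t = 1)
    (F : ℝ → ℝ) (hF : ∀ x, F x = ∫ t in Set.Iic x, f t)
    (x : ℝ) (hcont : ContinuousAt F x) :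
    Filter.Tendsto
      (fun ε : ℝ =>
        (1 / (2 * Real.pi) : ℂ) *
          ∫ y in {y : ℝ | ε ≤ |y| ∧ |y| ≤ 1 / ε},
            (∫ t : ℝ, (f t : ℂ) * Complex.exp (-Complex.I * (y : ℂ) * (t : ℂ))) /
                (Complex.I * (y : ℂ)) * Complex.exp (Complex.I * (x : ℂ) * (y : ℂ)))
      (nhdsWithin 0 (Set.Ioi 0))
      (nhds ((F x : ℂ) - 1 / 2)) := by
  have hlim := (cdf_fourier_inversion_general (hf_int.ofReal (𝕜 := ℂ)) x).comp
    (tendsto_id.prodMk tendsto_inv_nhdsGT_zero)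
  simpa [Function.comp_def, annulus, integral_complex_ofReal, ← integral_Iic_eq_integral_Iio, ← hF,
    hf_mass, ← two_mul, div_eq_mul_inv, mul_comm, mul_left_comm, mul_assoc] using hlim
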